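/- Let α = (a,b) be a partition (a ≥ b ≥ 0), let a_1,a_2,a_3,b_1,b_2,b_3 be nonnegative integers with a = a_1+a_2+a_3 and b = b_1+b_2+b_3, and let x ∈ Λ^{a_1+b_1}, y ∈ Λ^{a_2+b_2}, z ∈ Λ^{a_3+b_3}. Write Δ_{a_i,b_i} of x, y, z in Sweedler form as Σ_u x_u(a_1)⊗x'_u(b_1), Σ_v y_v(a_2)⊗y'_v(b_2), Σ_w z_w(a_3)⊗z'_w(b_3), and set ω = Σ_{u,v,w} x_u(a_1)∧y_v(a_2)∧z_w(a_3) ⊗ x'_u(b_1)∧y'_v(b_2)∧z'_w(b_3) ∈ Λ^a⊗Λ^b. If b_1 ≤ a_2+a_3, then in L_α one has π_α(ω) = (−1)^{(a_2+a_3+1)b_1} · Σ_{i_2,i_3} (−1)^{i_2(a_3−i_3)+i_3·b_2} C(b_2+i_2,b_2) C(b_3+i_3,b_3) · π_α( Σ_{v,w} x∧y_v(a_2−i_2)∧z_w(a_3−i_3) ⊗ y'_v(b_2+i_2)∧z'_w(b_3+i_3) ), where the outer sum is over all nonnegative integers i_2, i_3 with i_2+i_3 = b_1, i_2 ≤ a_2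 and i_3 ≤ a_3. -/

import Mathlib

open TensorProduct

set_option synthInstance.maxHeartbeats 1000000
set_option maxSynthPendingDepth 3
set_option maxHeartbeats 1000000

noncomputable section

namespace MMS

variable (K : Type) [Field K] [CharZero K] (n : ℕ)

/-- `V = K^n`, the natural module of `G = GL(n,K)`. -/
abbrev V : Type := Fin n → K

/-- `Λ^p`, the `p`-th exterior power of `V`. -/
abbrev Lam (p : ℕ) : Type := ⋀[K]^p (V K n)

/-- The wedge `v_1 ∧ ⋯ ∧ v_p ∈ Λ^p`. -/
def wedge {p : ℕ} (v : Fin p → V K n) : Lam K n p :=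
  ⟨ExteriorAlgebra.ιMulti K p v, ExteriorAlgebra.ιMulti_range K p (Set.mem_range_self v)⟩

/-- Transport along an equality of degrees. -/
def ecast {p q : ℕ} (h : p = q) : Lam K n p ≃ₗ[K] Lam K n q :=
  h ▸ LinearEquiv.refl K (Lam K n p)

/-- `m` is the wedge multiplication map `Λ^p ⊗ Λ^q → Λ^{p+q}`. -/
def IsMulMap (p q : ℕ) (m : Lam K n p ⊗[K] Lam K n q →ₗ[K] Lam K n (p+q)) : Prop :=
  ∀ (v : Fin p → V K n) (w : Fin q → V K n),
    m (wedge K n v ⊗ₜ[K] wedge K n w) = wedge K n (Fin.append v w)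

/-- The set of `(p,q)`-shuffles: permutations `σ` of `{1, …, p+q}` which are strictly
increasing on the first `p` and on the last `q` indices. -/
def shuffles (p q : ℕ) : Finset (Equiv.Perm (Fin (p+q))) :=
  Finset.univ.filter (fun σ =>
    (∀ i j : Fin (p+q), i < j → (j : ℕ) < p → σ i < σ j) ∧
    (∀ i j : Fin (p+q), i < j → p ≤ (i : ℕ) → σ i < σ j))

/-- `D` is the component `Δ_{p,q} : Λ^{p+q} → Λ^p ⊗ Λ^q` of the comultiplication, i.e.
`Δ_{p,q}(v_1 ∧ ⋯ ∧ v_{p+q}) = Σ_σ sgn(σ) (v_{σ(1)} ∧ ⋯ ∧ v_{σ(p)}) ⊗ (v_{σ(p+1)} ∧ ⋯ ∧ v_{σ(p+q)})`,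
the sum being over all `(p,q)`-shuffles. -/
def IsComulMap (p q : ℕ) (D : Lam K n (p+q) →ₗ[K] Lam K n p ⊗[K] Lam K n q) : Prop :=
  ∀ v : Fin (p+q) → V K n,
    D (wedge K n v) =
      ∑ σ ∈ shuffles p q,
        (Equiv.Perm.sign σ : ℤ) •
          (wedge K n (fun i => v (σ (Fin.castAdd q i))) ⊗ₜ[K]
            wedge K n (fun i => v (σ (Fin.natAdd p i))))

variable (mf : ∀ p q : ℕ, Lam K n p ⊗[K] Lam K n q →ₗ[K] Lam K n (p+q))
variable (Df : ∀ p q : ℕ, Lam K n (p+q) →ₗ[K] Lam K n p ⊗[K] Lam K n q)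

/-- The map `δ_t = (m ⊗ 1) ∘ (1 ⊗ Δ_{t,b-t}) : Λ^a ⊗ Λ^b → Λ^{a+t} ⊗ Λ^{b-t}`. -/
def deltaMap (a b t : ℕ) (ht : t ≤ b) :
    Lam K n a ⊗[K] Lam K n b →ₗ[K] Lam K n (a+t) ⊗[K] Lam K n (b-t) :=
  (TensorProduct.map (mf a t) LinearMap.id)
    ∘ₗ (TensorProduct.assoc K (Lam K n a) (Lam K n t) (Lam K n (b-t))).symm.toLinearMap
    ∘ₗ (TensorProduct.map LinearMap.id
        ((Df t (b-t)) ∘ₗ (ecast K n (by omega : b = t + (b-t))).toLinearMap))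

/-- The map `θ_t = (1 ⊗ m) ∘ (Δ_{a-t,t} ⊗ 1) : Λ^a ⊗ Λ^b → Λ^{a-t} ⊗ Λ^{b+t}`. -/
def thetaMap (a b t : ℕ) (ht : t ≤ a) :
    Lam K n a ⊗[K] Lam K n b →ₗ[K] Lam K n (a-t) ⊗[K] Lam K n (b+t) :=
  (TensorProduct.map LinearMap.id
      ((ecast K n (by omega : t + b = b + t)).toLinearMap ∘ₗ mf t b))
    ∘ₗ (TensorProduct.assoc K (Lam K n (a-t)) (Lam K n t) (Lam K n b)).toLinearMap
    ∘ₗ (TensorProduct.map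
        ((Df (a-t) t) ∘ₗ (ecast K n (by omega : a = (a-t) + t)).toLinearMap) LinearMap.id)

/-- The map `Φ_t = θ_t ∘ δ_t : Λ^a ⊗ Λ^b → Λ^a ⊗ Λ^b`. -/
def PhiMap (a b t : ℕ) (hta : t ≤ a) (htb : t ≤ b) :
    Lam K n a ⊗[K] Lam K n b →ₗ[K] Lam K n a ⊗[K] Lam K n b :=
  (TensorProduct.congr (ecast K n (by omega : a + t - t = a))
      (ecast K n (by omega : b - t + t = b))).toLinearMap
    ∘ₗ thetaMap K n mf Df (a+t) (b-t) t (by omega)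
    ∘ₗ deltaMap K n mf Df a b t htb

/-- The map `Φ_t`, extended by `0` to all `t`. -/
def PhiMap' (a b t : ℕ) :
    Lam K n a ⊗[K] Lam K n b →ₗ[K] Lam K n a ⊗[K] Lam K n b :=
  if h : t ≤ a ∧ t ≤ b then PhiMap K n mf Df a b t h.1 h.2 else 0

/-- The map `θ_1 : Λ^{a+1} ⊗ Λ^{b-1} → Λ^a ⊗ Λ^b` (for `b ≥ 1`). -/
def theta1 (a b : ℕ) (hb : 1 ≤ b) :
    Lam K n (a+1) ⊗[K] Lam K n (b-1) →ₗ[K] Lam K n a ⊗[K] Lam K n b :=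
  (TensorProduct.congr (ecast K n (by omega : a + 1 - 1 = a))
      (ecast K n (by omega : b - 1 + 1 = b))).toLinearMap
    ∘ₗ thetaMap K n mf Df (a+1) (b-1) 1 (by omega)

/-- The submodule of relations defining the Schur module `L_{(a,b)}`: the image of
`θ_1` if `b ≥ 1`, and `0` if `b = 0`. -/
def schurRel (a b : ℕ) : Submodule K (Lam K n a ⊗[K] Lam K n b) :=
  if hb : 1 ≤ b then LinearMap.range (theta1 K n mf Df a b hb) else ⊥

/-- The Schur module `L_{(a,b)}`, realized as the cokernel of `θ_1` (in characteristic zero). -/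
abbrev SchurL (a b : ℕ) : Type :=
  (Lam K n a ⊗[K] Lam K n b) ⧸ schurRel K n mf Df a b

/-- The projection `π_{(a,b)} : Λ^a ⊗ Λ^b → L_{(a,b)}`. -/
def schurProj (a b : ℕ) : Lam K n a ⊗[K] Lam K n b →ₗ[K] SchurL K n mf Df a b :=
  (schurRel K n mf Df a b).mkQ

/-- The coefficient `c_t(a,b,i) = C(i,t)·C(a-b+t+i,t)`. -/
def cCoef (a b t i : ℕ) : ℕ := (i.choose t) * ((a-b+t+i).choose t)

/-- The group `G = GL(n,K)`. -/
abbrev GLn : Type := Matrix.GeneralLinearGroup (Fin n) K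

/-- `rho` is the family of natural actions of `G = GL(n,K)` on the exterior powers `Λ^p`
of the natural module `V = K^n`. -/
def IsExtAction (rho : ∀ p : ℕ, GLn K n → (Lam K n p →ₗ[K] Lam K n p)) : Prop :=
  ∀ (p : ℕ) (g : GLn K n) (v : Fin p → V K n),
    rho p g (wedge K n v) =
      wedge K n (fun i => Matrix.toLin' (g : Matrix (Fin n) (Fin n) K) (v i))

/-- The action of `g ∈ GL(n,K)` on `Λ^a ⊗ Λ^b`. -/
def rhoT (rho : ∀ p : ℕ, GLn K n → (Lam K n p →ₗ[K] Lam K n p)) (a b : ℕ) (g : GLn K n) :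
    Lam K n a ⊗[K] Lam K n b →ₗ[K] Lam K n a ⊗[K] Lam K n b :=
  TensorProduct.map (rho a g) (rho b g)

/-- The quotients `M₁ ⧸ N₁` and `M₂ ⧸ N₂` are isomorphic as representations, with respect
to the given actions `ρ₁, ρ₂` on `M₁` and `M₂` (which descend to the quotients). -/
def IsQuotIso {G' : Type} {M₁ M₂ : Type} [AddCommGroup M₁] [Module K M₁]
    [AddCommGroup M₂] [Module K M₂]
    (N₁ : Submodule K M₁) (N₂ : Submodule K M₂)
    (ρ₁ : G' → M₁ →ₗ[K] M₁) (ρ₂ : G' → M₂ →ₗ[K] M₂) : Prop :=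
  ∃ e : (M₁ ⧸ N₁) ≃ₗ[K] (M₂ ⧸ N₂),
    ∀ (g : G') (x : M₁) (y : M₂),
      e (Submodule.Quotient.mk x) = Submodule.Quotient.mk y →
      e (Submodule.Quotient.mk (ρ₁ g x)) = Submodule.Quotient.mk (ρ₂ g y)

/-- The "multiply in pairs" map
`(Λ^{p₁} ⊗ Λ^{q₁}) ⊗ (Λ^{p₂} ⊗ Λ^{q₂}) → Λ^{p₁+p₂} ⊗ Λ^{q₁+q₂}`. -/
def pairMul (p₁ q₁ p₂ q₂ : ℕ) :
    (Lam K n p₁ ⊗[K] Lam K n q₁) ⊗[K] (Lam K n p₂ ⊗[K] Lam K n q₂) →ₗ[K]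
      Lam K n (p₁+p₂) ⊗[K] Lam K n (q₁+q₂) :=
  (TensorProduct.map (mf p₁ p₂) (mf q₁ q₂))
    ∘ₗ (TensorProduct.tensorTensorTensorComm K (Lam K n p₁) (Lam K n q₁)
        (Lam K n p₂) (Lam K n q₂)).toLinearMap

/-- The map `φ_k = (m ⊗ m) ∘ (1 ⊗ τ ⊗ 1) ∘ (Δ_{a-k,k} ⊗ Δ_{k,b-k}) : Λ^a ⊗ Λ^b → Λ^a ⊗ Λ^b`. -/
def phiSmall (a b k : ℕ) (hka : k ≤ a) (hkb : k ≤ b) :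
    Lam K n a ⊗[K] Lam K n b →ₗ[K] Lam K n a ⊗[K] Lam K n b :=
  (TensorProduct.congr (ecast K n (by omega : (a-k) + k = a))
      (ecast K n (by omega : k + (b-k) = b))).toLinearMap
    ∘ₗ pairMul K n mf (a-k) k k (b-k)
    ∘ₗ (TensorProduct.map
        ((Df (a-k) k) ∘ₗ (ecast K n (by omega : a = (a-k) + k)).toLinearMap)
        ((Df k (b-k)) ∘ₗ (ecast K n (by omega : b = k + (b-k))).toLinearMap))

/-- The map `ψ_k = C(b,k)·1 - φ_k : Λ^a ⊗ Λ^b → Λ^a ⊗ Λ^b`. -/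
def psiSmall (a b k : ℕ) (hka : k ≤ a) (hkb : k ≤ b) :
    Lam K n a ⊗[K] Lam K n b →ₗ[K] Lam K n a ⊗[K] Lam K n b :=
  (Nat.choose b k : K) • LinearMap.id - phiSmall K n mf Df a b k hka hkb

/-- The map `β_k = (m ⊗ m) ∘ (1 ⊗ τ ⊗ 1) ∘ (Δ_{a-k,k} ⊗ 1 ⊗ 1) : Λ^a ⊗ (Λ^k ⊗ Λ^{b-k}) → Λ^a ⊗ Λ^b`. -/
def betaMap (a b k : ℕ) (hka : k ≤ a) (hkb : k ≤ b) :
    Lam K n a ⊗[K] (Lam K n k ⊗[K] Lam K n (b-k)) →ₗ[K] Lam K n a ⊗[K] Lam K n b :=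
  (TensorProduct.congr (ecast K n (by omega : (a-k) + k = a))
      (ecast K n (by omega : k + (b-k) = b))).toLinearMap
    ∘ₗ pairMul K n mf (a-k) k k (b-k)
    ∘ₗ (TensorProduct.map
        ((Df (a-k) k) ∘ₗ (ecast K n (by omega : a = (a-k) + k)).toLinearMap)
        LinearMap.id)

/-- The map `γ_k : Λ^a ⊗ (Λ^k ⊗ Λ^{b-k}) → Λ^a ⊗ Λ^b`,
`γ_k(x ⊗ y ⊗ z) = x ⊗ (y ∧ z) - β_k(x ⊗ y ⊗ z)`. -/
def gammaMap (a b k : ℕ) (hka : k ≤ a) (hkb : k ≤ b) :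
    Lam K n a ⊗[K] (Lam K n k ⊗[K] Lam K n (b-k)) →ₗ[K] Lam K n a ⊗[K] Lam K n b :=
  (TensorProduct.map LinearMap.id
      ((ecast K n (by omega : k + (b-k) = b)).toLinearMap ∘ₗ mf k (b-k)))
    - betaMap K n mf Df a b k hka hkb

/-- The quantity `d_k(a,b,t)` (for the given `i`), from Lemma 5.3 of the paper. -/
def dInt (a b k i t : ℕ) : ℤ :=
  1 - ∑ j ∈ Finset.Icc (i - min (b-k) i) t,
        (-1:ℤ)^j * ((a-k+j).choose (a-k) : ℤ) * ((b-k+t-i).choose (t-j) : ℤ)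

end MMS

/-!
Embed `Λ^p ⊗ Λ^q` in `Λ(V × V)` as its part of bidegree `(p, q)`, the first copy of `V` carrying
`Λ^p` and the second `Λ^q`. Then `Δ_{p,q}` is the restriction to `Λ^{p+q} ⊗ 1` of the divided power
`D_q` of the derivation `D_1` that moves the first copy of `V` onto the second, `θ_1` is `D_1`
itself, and products of Sweedler sums are products in `Λ(V × V)` up to a Koszul sign. The relations
of `L_{(a,b)}` are thus the image of `D_1`, so integration by parts gives
`D_k X * W ≡ (-1)^k X * D_k W`. For `k = b₁`, `X = x` and `W = D_{b₂} y * D_{b₃} z`, expanding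
`D_{b₁} W` with the Leibniz rule and `D_k D_l = C(k + l, l) D_{k+l}` is the exchange formula.
-/

namespace MMS

section DividedPowers

open ExteriorAlgebra Polynomial
open Finset (powersetCard)
open Finset.HasAntidiagonal (antidiagonal)

variable {R M N : Type*} [CommRing R] [AddCommGroup M] [Module R M]
  [AddCommGroup N] [Module R N]

/-- The algebra map `Λ(M) → Λ(M)[X]` sending `m` to `m + f(m) X`. -/
def divPowSeries (f : M →ₗ[R] M) : ExteriorAlgebra R M →ₐ[R] (ExteriorAlgebra R M)[X] :=
  lift R
    ⟨(monomial 0).restrictScalars R ∘ₗ ι R + (monomial 1).restrictScalars R ∘ₗ ι R ∘ₗ f,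
      fun m => by
        simp only [LinearMap.add_apply, LinearMap.comp_apply, LinearMap.restrictScalars_apply,
          add_mul, mul_add, monomial_mul_monomial, ι_sq_zero, map_zero, zero_add, add_zero]
        rw [← map_add, ι_add_mul_swap, map_zero]⟩

/-- The coefficient of `X ^ k` in `divPowSeries f`. When `f ∘ₗ f = 0` this is the `k`-th divided
power `d ^ k / k!` of the derivation `d` of `Λ(M)` extending `f`; the definition as a coefficient
needs no division. -/
def divPow (f : M →ₗ[R] M) (k : ℕ) : ExteriorAlgebra R M →ₗ[R] ExteriorAlgebra R M :=
  (lcoeff (ExteriorAlgebra R M) k).restrictScalars R ∘ₗ (divPowSeries f).toLinearMap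

theorem divPowSeries_ι (f : M →ₗ[R] M) (m : M) :
    divPowSeries f (ι R m) = monomial 0 (ι R m) + monomial 1 (ι R (f m)) := by
  simp [divPowSeries]

theorem divPow_apply (f : M →ₗ[R] M) (k : ℕ) (x : ExteriorAlgebra R M) :
    divPow f k x = (divPowSeries f x).coeff k := rfl

theorem divPow_mul (f : M →ₗ[R] M) (k : ℕ) (x y : ExteriorAlgebra R M) :
    divPow f k (x * y) = ∑ ij ∈ antidiagonal k, divPow f ij.1 x * divPow f ij.2 y := by
  simp only [divPow_apply, map_mul, coeff_mul]

theorem divPow_zero (f : M →ₗ[R] M) (x : ExteriorAlgebra R M) : divPow f 0 x = x := by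
  induction x using ExteriorAlgebra.induction with
  | algebraMap r => rw [divPow_apply, AlgHom.commutes, Polynomial.algebraMap_apply, coeff_C_zero]
  | ι m => simp [divPow_apply, divPowSeries_ι, coeff_monomial]
  | mul x y hx hy => simp [divPow_mul, hx, hy]
  | add x y hx hy => rw [map_add, hx, hy]

theorem divPow_one_mul (f : M →ₗ[R] M) (x y : ExteriorAlgebra R M) :
    divPow f 1 (x * y) = divPow f 1 x * y + x * divPow f 1 y := by
  rw [divPow_mul, Finset.Nat.antidiagonal_succ]
  simp [divPow_zero, add_comm]

theorem hasseDeriv_divPowSeries {f : M →ₗ[R] M} (hf : f ∘ₗ f = 0) (k : ℕ)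
    (x : ExteriorAlgebra R M) :
    hasseDeriv k (divPowSeries f x) = divPowSeries f (divPow f k x) := by
  induction x using ExteriorAlgebra.induction generalizing k with
  | algebraMap r =>
    rw [divPow_apply, AlgHom.commutes, Polynomial.algebraMap_apply]
    rcases k.eq_zero_or_pos with rfl | hk
    · rw [hasseDeriv_zero', coeff_C_zero, AlgHom.commutes, Polynomial.algebraMap_apply]
    · rw [hasseDeriv_C _ _ hk, coeff_C_of_ne_zero hk.ne', map_zero]
  | ι m =>
    have hfm : f (f m) = 0 := LinearMap.congr_fun hf m
    rcases k with _ | _ | k <;>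
      simp [divPow_apply, divPowSeries_ι, hasseDeriv_C, hasseDeriv_monomial, coeff_monomial,
        Nat.choose_eq_zero_of_lt, hfm]
  | mul x y hx hy => simp only [map_mul, hasseDeriv_mul, divPow_mul, map_sum, hx, hy]
  | add x y hx hy => simp only [map_add, hx, hy]

theorem divPow_divPow {f : M →ₗ[R] M} (hf : f ∘ₗ f = 0) (k l : ℕ) (x : ExteriorAlgebra R M) :
    divPow f k (divPow f l x) = ((l + k).choose l : R) • divPow f (l + k) x := by
  rw [divPow_apply, ← hasseDeriv_divPowSeries hf, hasseDeriv_coeff, divPow_apply, add_comm k l,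
    Nat.cast_smul_eq_nsmul, nsmul_eq_mul]

theorem divPow_divPow_mul_divPow {f : M →ₗ[R] M} (hf : f ∘ₗ f = 0) (k b c : ℕ)
    (x y : ExteriorAlgebra R M) :
    divPow f k (divPow f b x * divPow f c y) =
      ∑ ij ∈ antidiagonal k, ((b + ij.1).choose b * (c + ij.2).choose c : R) •
        (divPow f (b + ij.1) x * divPow f (c + ij.2) y) := by
  simp only [divPow_mul, divPow_divPow hf, smul_mul_smul_comm]

theorem prod_ofFn_monomial {A : Type*} [Semiring A] {p : ℕ} (d : Fin p → ℕ) (w : Fin p → A) :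
    (List.ofFn fun i => monomial (d i) (w i)).prod = monomial (∑ i, d i) (List.ofFn w).prod := by
  induction p with
  | zero => simp
  | succ p ih => simp [List.ofFn_succ, Fin.sum_univ_succ, ih, monomial_mul_monomial]

theorem prod_ofFn_piecewise_monomial (f : M →ₗ[R] M) {p : ℕ} (v : Fin p → M)
    (S : Finset (Fin p)) :
    (List.ofFn (S.piecewise (fun i => monomial 1 (ι R (f (v i))))
      (fun i => monomial 0 (ι R (v i))))).prod =
      monomial S.card (ιMulti R p (S.piecewise (f ∘ v) v)) := by
  rw [ιMulti_apply, show S.card = ∑ i, if i ∈ S then 1 else 0 by simp, ← prod_ofFn_monomial]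
  congr 2
  funext i
  by_cases hi : i ∈ S <;> simp [hi]

theorem divPowSeries_ιMulti (f : M →ₗ[R] M) {p : ℕ} (v : Fin p → M) :
    divPowSeries f (ιMulti R p v) =
      ∑ S : Finset (Fin p), monomial S.card (ιMulti R p (S.piecewise (f ∘ v) v)) := by
  have hv : (divPowSeries f ∘ fun i => ι R (v i)) =
      (fun i => monomial 1 (ι R (f (v i)))) + fun i => monomial 0 (ι R (v i)) := by
    funext i
    rw [Function.comp_apply, divPowSeries_ι, add_comm, Pi.add_apply]
  rw [ιMulti_apply, map_list_prod, List.map_ofFn, hv,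
    ← MultilinearMap.mkPiAlgebraFin_apply (R := R), MultilinearMap.map_add_univ]
  simp only [MultilinearMap.mkPiAlgebraFin_apply, prod_ofFn_piecewise_monomial]

theorem divPow_ιMulti (f : M →ₗ[R] M) {p : ℕ} (k : ℕ) (v : Fin p → M) :
    divPow f k (ιMulti R p v) =
      ∑ S ∈ powersetCard k Finset.univ, ιMulti R p (S.piecewise (f ∘ v) v) := by
  rw [divPow_apply, divPowSeries_ιMulti, finsetSum_coeff]
  simp only [coeff_monomial, ← Finset.sum_filter]
  refine Finset.sum_congr ?_ fun _ _ => rfl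
  ext S
  simp [Finset.mem_powersetCard]

theorem divPow_map_eq_zero_of_lt (f : M →ₗ[R] M) (g : N →ₗ[R] M) {p q : ℕ} (hpq : p < q)
    (x : ⋀[R]^p N) : divPow f q (map g x) = 0 := by
  suffices h : divPow f q ∘ₗ (map g).toLinearMap ∘ₗ (⋀[R]^p N).subtype = 0 from
    LinearMap.congr_fun h x
  refine exteriorPower.linearMap_ext (AlternatingMap.ext fun v => ?_)
  have hempty : powersetCard q (Finset.univ : Finset (Fin p)) = ∅ :=
    Finset.powersetCard_eq_empty.2 (by simpa using hpq)
  simp [map_apply_ιMulti, divPow_ιMulti, hempty]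

theorem divPow_map_of_comp_eq_zero {f : M →ₗ[R] M} {g : N →ₗ[R] M} (hfg : f ∘ₗ g = 0) {k : ℕ}
    (hk : k ≠ 0) (x : ExteriorAlgebra R N) : divPow f k (map g x) = 0 := by
  have hconst : (divPowSeries f).comp (map g) = CAlgHom.comp (map g) := by
    ext m : 2
    have hfgm : f (g m) = 0 := LinearMap.congr_fun hfg m
    simp [divPowSeries_ι, hfgm]
  have h := DFunLike.congr_fun hconst x
  rw [AlgHom.comp_apply] at h
  rw [divPow_apply, h, AlgHom.comp_apply, CAlgHom_apply, coeff_C_of_ne_zero hk]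

end DividedPowers

section Shuffles

variable {p q : ℕ}

theorem mem_shuffles {σ : Equiv.Perm (Fin (p + q))} :
    σ ∈ shuffles p q ↔ StrictMono (σ ∘ Fin.castAdd q) ∧ StrictMono (σ ∘ Fin.natAdd p) := by
  simp only [shuffles, Finset.mem_filter, Finset.mem_univ, true_and]
  constructor
  · rintro ⟨hleft, hright⟩
    refine ⟨fun i j hij => hleft _ _ ?_ (by simp), fun i j hij => hright _ _ ?_ (by simp)⟩
    · simpa only [Fin.lt_def, Fin.val_castAdd] using hij
    · simpa only [Fin.natAdd_lt_natAdd_iff] using hij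
  · rintro ⟨hleft, hright⟩
    refine ⟨fun i j hij hj => hleft (a := ⟨i, by omega⟩) (b := ⟨j, hj⟩) hij, fun i j hij hi => ?_⟩
    obtain ⟨k, rfl⟩ : ∃ k, Fin.natAdd p k = i :=
      ⟨⟨i - p, by omega⟩, Fin.ext (Nat.add_sub_cancel' hi)⟩
    obtain ⟨l, rfl⟩ : ∃ l, Fin.natAdd p l = j :=
      ⟨⟨j - p, by omega⟩, Fin.ext (Nat.add_sub_cancel' (hi.trans hij.le))⟩
    exact hright ((Fin.natAdd_lt_natAdd_iff p).1 hij)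

/-- The set of values of a permutation of `Fin (p + q)` on the last `q` indices; a
`(p, q)`-shuffle is determined by it. -/
def tailImage (p q : ℕ) (σ : Equiv.Perm (Fin (p + q))) : Finset (Fin (p + q)) :=
  Finset.univ.image (σ ∘ Fin.natAdd p)

theorem natAdd_mem_tailImage (σ : Equiv.Perm (Fin (p + q))) (j : Fin q) :
    σ (Fin.natAdd p j) ∈ tailImage p q σ :=
  Finset.mem_image_of_mem _ (Finset.mem_univ j)

theorem castAdd_notMem_tailImage (σ : Equiv.Perm (Fin (p + q))) (i : Fin p) :
    σ (Fin.castAdd q i) ∉ tailImage p q σ := by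
  simp only [tailImage, Finset.mem_image, Finset.mem_univ, true_and, Function.comp_apply,
    EmbeddingLike.apply_eq_iff_eq, not_exists, Fin.ext_iff, Fin.val_natAdd, Fin.val_castAdd]
  omega

theorem card_tailImage (σ : Equiv.Perm (Fin (p + q))) : (tailImage p q σ).card = q :=
  (Finset.card_image_of_injective _ (σ.injective.comp (Fin.natAdd_injective q p))).trans
    (Finset.card_fin q)

theorem injOn_tailImage (p q : ℕ) : Set.InjOn (tailImage p q) (shuffles p q) := by
  intro σ hσ τ hτ h
  obtain ⟨hσ_left, hσ_right⟩ := mem_shuffles.1 hσ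
  obtain ⟨hτ_left, hτ_right⟩ := mem_shuffles.1 hτ
  have hcard : (tailImage p q σ)ᶜ.card = p := by
    rw [Finset.card_compl, card_tailImage, Fintype.card_fin, Nat.add_sub_cancel]
  have hleft : σ ∘ Fin.castAdd q = τ ∘ Fin.castAdd q :=
    (Finset.orderEmbOfFin_unique hcard
      (fun i => Finset.mem_compl.2 (castAdd_notMem_tailImage σ i)) hσ_left).trans
    (Finset.orderEmbOfFin_unique hcard
      (fun i => Finset.mem_compl.2 (h ▸ castAdd_notMem_tailImage τ i)) hτ_left).symm
  have hright : σ ∘ Fin.natAdd p = τ ∘ Fin.natAdd p :=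
    (Finset.orderEmbOfFin_unique (card_tailImage σ) (natAdd_mem_tailImage σ) hσ_right).trans
    (Finset.orderEmbOfFin_unique (card_tailImage σ) (fun j => h ▸ natAdd_mem_tailImage τ j)
      hτ_right).symm
  ext i : 1
  induction i using Fin.addCases with
  | left i => exact congrFun hleft i
  | right j => exact congrFun hright j

theorem exists_shuffle_tailImage_eq {S : Finset (Fin (p + q))} (hS : S.card = q) :
    ∃ σ ∈ shuffles p q, tailImage p q σ = S := by
  have hcard : Sᶜ.card = p := by
    rw [Finset.card_compl, hS, Fintype.card_fin, Nat.add_sub_cancel]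
  have hcard' : Sᶜᶜ.card = q := by rwa [compl_compl]
  let σ : Equiv.Perm (Fin (p + q)) :=
    finSumFinEquiv.symm.trans (finSumEquivOfFinset hcard hcard')
  have hleft : σ ∘ Fin.castAdd q = Sᶜ.orderEmbOfFin hcard := by
    ext i
    simp [σ]
  have hright : σ ∘ Fin.natAdd p = Sᶜᶜ.orderEmbOfFin hcard' := by
    ext j
    simp [σ]
  refine ⟨σ, mem_shuffles.2 ⟨?_, ?_⟩, ?_⟩
  · rw [hleft]
    exact (Sᶜ.orderEmbOfFin hcard).strictMono
  · rw [hright]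
    exact (Sᶜᶜ.orderEmbOfFin hcard').strictMono
  · rw [tailImage, hright, Finset.image_orderEmbOfFin_univ, compl_compl]

theorem sum_shuffles_alternatingMap {R M N : Type*} [CommRing R] [AddCommGroup M] [Module R M]
    [AddCommGroup N] [Module R N] (g : M [⋀^Fin (p + q)]→ₗ[R] N) (α β : Fin (p + q) → M) :
    ∑ σ ∈ shuffles p q, (Equiv.Perm.sign σ : ℤ) •
      g (Fin.append (fun i => α (σ (Fin.castAdd q i))) fun j => β (σ (Fin.natAdd p j))) =
    ∑ S ∈ Finset.powersetCard q Finset.univ, g (S.piecewise β α) := by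
  refine Finset.sum_nbij (tailImage p q)
    (fun σ _ => Finset.mem_powersetCard.2 ⟨Finset.subset_univ _, card_tailImage σ⟩)
    (injOn_tailImage p q)
    (fun S hS => exists_shuffle_tailImage_eq (Finset.mem_powersetCard.1 hS).2) fun σ _ => ?_
  have hperm : Fin.append (fun i => α (σ (Fin.castAdd q i))) (fun j => β (σ (Fin.natAdd p j))) =
      (tailImage p q σ).piecewise β α ∘ σ := by
    funext i
    induction i using Fin.addCases with
    | left i => simp [castAdd_notMem_tailImage]
    | right j => simp [natAdd_mem_tailImage]
  rw [hperm, g.map_perm, Units.smul_def, smul_smul, ← Units.val_mul, Int.units_mul_self,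
    Units.val_one, one_smul]

end Shuffles

section Bigrading

open ExteriorAlgebra

variable {R M N P : Type*} [CommRing R] [AddCommGroup M] [Module R M] [AddCommGroup N]
  [Module R N] [AddCommGroup P] [Module R P]

theorem exteriorPower_le_evenOdd (p : ℕ) :
    ⋀[R]^p M ≤ CliffordAlgebra.evenOdd (0 : QuadraticForm R M) p :=
  le_iSup_of_le ⟨p, rfl⟩ le_rfl

theorem map_mul_map_comm {f : M →ₗ[R] P} {g : N →ₗ[R] P} {p q : ℕ}
    (x : ⋀[R]^p M) (y : ⋀[R]^q N) :
    map f x * map g y = (-1 : R) ^ (p * q) • (map g y * map f x) := by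
  have h := CliffordAlgebra.map_mul_map_of_isOrtho_of_mem_evenOdd
    (Q₁ := (0 : QuadraticForm R M)) (Q₂ := (0 : QuadraticForm R N)) (Qₙ := (0 : QuadraticForm R P))
    { f with map_app' := fun _ => rfl } { g with map_app' := fun _ => rfl }
    (fun _ _ => by simp [QuadraticMap.isOrtho_def]) _ _
    (exteriorPower_le_evenOdd p x.2) (exteriorPower_le_evenOdd q y.2)
  rw [← Nat.cast_mul, uzpow_natCast, mul_comm q p, Units.smul_def, ← Int.cast_smul_eq_zsmul R] at h
  simpa using! h

variable (R M) in
/-- The endomorphism `(u, w) ↦ (0, u)` of `M × M`. -/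
def shift : M × M →ₗ[R] M × M := LinearMap.inr R M M ∘ₗ LinearMap.fst R M M

theorem shift_comp_shift : shift R M ∘ₗ shift R M = 0 := by
  ext <;> simp [shift]

theorem shift_comp_inl : shift R M ∘ₗ LinearMap.inl R M M = LinearMap.inr R M M := by
  ext <;> simp [shift]

theorem shift_comp_inr : shift R M ∘ₗ LinearMap.inr R M M = 0 := by
  ext <;> simp [shift]

variable (R M) in
/-- The embedding of `Λ(M)` into `Λ(M × M)` induced by the first inclusion. -/
abbrev inlHom : ExteriorAlgebra R M →ₐ[R] ExteriorAlgebra R (M × M) := map (LinearMap.inl R M M)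

variable (R M) in
/-- The embedding of `Λ(M)` into `Λ(M × M)` induced by the second inclusion. -/
abbrev inrHom : ExteriorAlgebra R M →ₐ[R] ExteriorAlgebra R (M × M) := map (LinearMap.inr R M M)

variable (R M) in
/-- The `k`-th polarization operator on `Λ(M × M)`: the divided power of the derivation replacing
factors from the first copy of `M` by the same vectors in the second copy. -/
abbrev polarization (k : ℕ) :
    ExteriorAlgebra R (M × M) →ₗ[R] ExteriorAlgebra R (M × M) := divPow (shift R M) k

variable (R M) in
/-- The embedding of `Λ^p(M) ⊗ Λ^q(M)` into `Λ(M × M)` as the part of bidegree `(p, q)`. -/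
def bidegreeEmb (p q : ℕ) : ⋀[R]^p M ⊗[R] ⋀[R]^q M →ₗ[R] ExteriorAlgebra R (M × M) :=
  LinearMap.mul' R _ ∘ₗ TensorProduct.map ((inlHom R M).toLinearMap ∘ₗ (⋀[R]^p M).subtype)
    ((inrHom R M).toLinearMap ∘ₗ (⋀[R]^q M).subtype)

theorem bidegreeEmb_tmul {p q : ℕ} (u : ⋀[R]^p M) (w : ⋀[R]^q M) :
    bidegreeEmb R M p q (u ⊗ₜ w) = inlHom R M u * inrHom R M w := rfl

theorem exists_comp_subtype_exteriorPower_eq_id (p : ℕ) :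
    ∃ proj : ExteriorAlgebra R M →ₗ[R] ⋀[R]^p M, proj ∘ₗ (⋀[R]^p M).subtype = LinearMap.id := by
  refine ⟨DirectSum.component R ℕ (fun i => ⋀[R]^i M) p ∘ₗ
    (DirectSum.decomposeLinearEquiv fun i => ⋀[R]^i M).toLinearMap, LinearMap.ext fun x => ?_⟩
  rw [LinearMap.comp_apply, LinearMap.comp_apply, Submodule.subtype_apply,
    LinearEquiv.coe_coe, DirectSum.decomposeLinearEquiv_apply, DirectSum.decompose_coe]
  exact DirectSum.component.lof_self ..

theorem map_subtype_exteriorPower_injective (p q : ℕ) :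
    Function.Injective (TensorProduct.map (⋀[R]^p M).subtype (⋀[R]^q N).subtype) := by
  obtain ⟨proj₁, h₁⟩ := exists_comp_subtype_exteriorPower_eq_id (R := R) (M := M) p
  obtain ⟨proj₂, h₂⟩ := exists_comp_subtype_exteriorPower_eq_id (R := R) (M := N) q
  refine LinearMap.injective_of_comp_eq_id _ (TensorProduct.map proj₁ proj₂) ?_
  rw [← TensorProduct.map_comp, h₁, h₂, TensorProduct.map_id]

theorem bidegreeEmb_injective (p q : ℕ) : Function.Injective (bidegreeEmb R M p q) := by
  -- `Λ(M × M)` is a graded tensor product because the Clifford algebra of an orthogonal sum is.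
  let Q : QuadraticForm R M := 0
  let toExt : CliffordAlgebra (Q.prod Q) ≃ₐ[R] ExteriorAlgebra R (M × M) :=
    CliffordAlgebra.equivOfIsometry
      { LinearEquiv.refl R (M × M) with map_app' := fun m => by simp [Q] }
  have hinl : (toExt : _ →ₐ[R] _).comp (CliffordAlgebra.map (.inl Q Q)) = inlHom R M := by
    refine ExteriorAlgebra.hom_ext (LinearMap.ext fun m => ?_)
    refine (congrArg toExt (CliffordAlgebra.map_apply_ι (.inl Q Q) m)).trans ?_
    exact (CliffordAlgebra.map_apply_ι _ _).trans (map_apply_ι (LinearMap.inl R M M) m).symm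
  have hinr : (toExt : _ →ₐ[R] _).comp (CliffordAlgebra.map (.inr Q Q)) = inrHom R M := by
    refine ExteriorAlgebra.hom_ext (LinearMap.ext fun m => ?_)
    refine (congrArg toExt (CliffordAlgebra.map_apply_ι (.inr Q Q) m)).trans ?_
    exact (CliffordAlgebra.map_apply_ι _ _).trans (map_apply_ι (LinearMap.inr R M M) m).symm
  have hfactor : toExt.toLinearMap ∘ₗ (CliffordAlgebra.toProd Q Q).toLinearMap ∘ₗ
      (GradedTensorProduct.of R (CliffordAlgebra.evenOdd Q)
        (CliffordAlgebra.evenOdd Q)).toLinearMap ∘ₗ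
        TensorProduct.map (⋀[R]^p M).subtype (⋀[R]^q M).subtype = bidegreeEmb R M p q := by
    refine TensorProduct.ext' fun u w => ?_
    rw [bidegreeEmb_tmul, ← hinl, ← hinr]
    exact map_mul toExt _ _
  rw [← hfactor]
  exact toExt.injective.comp <| (CliffordAlgebra.prodEquiv Q Q).symm.injective.comp <|
    (GradedTensorProduct.of R _ _).injective.comp <| map_subtype_exteriorPower_injective p q

end Bigrading

section Relations

open ExteriorAlgebra
open scoped Nat

variable {R M : Type*} [CommRing R] [AddCommGroup M] [Module R M]

theorem bidegreeEmb_tmul_mul_tmul {p₁ q₁ p₂ q₂ : ℕ} (u₁ : ⋀[R]^p₁ M) (w₁ : ⋀[R]^q₁ M)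
    (u₂ : ⋀[R]^p₂ M) (w₂ : ⋀[R]^q₂ M) :
    bidegreeEmb R M p₁ q₁ (u₁ ⊗ₜ w₁) * bidegreeEmb R M p₂ q₂ (u₂ ⊗ₜ w₂) =
      (-1 : R) ^ (q₁ * p₂) • (inlHom R M (u₁ * u₂) * inrHom R M (w₁ * w₂)) := by
  rw [bidegreeEmb_tmul, bidegreeEmb_tmul, mul_assoc, ← mul_assoc (inrHom R M w₁),
    map_mul_map_comm w₁ u₂, smul_mul_assoc, mul_smul_comm, map_mul, map_mul]
  simp only [mul_assoc]

variable (R M) in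
/-- The part of bidegree `(p, q)` of `Λ(M × M)`. -/
def bidegree (p q : ℕ) : Submodule R (ExteriorAlgebra R (M × M)) :=
  LinearMap.range (bidegreeEmb R M p q)

theorem inlHom_mem_bidegree {p : ℕ} (u : ⋀[R]^p M) : inlHom R M u ∈ bidegree R M p 0 :=
  ⟨u ⊗ₜ ⟨1, SetLike.one_mem_graded (⋀[R]^· M)⟩, by simp [bidegreeEmb_tmul]⟩

theorem inrHom_mem_bidegree {q : ℕ} (w : ⋀[R]^q M) : inrHom R M w ∈ bidegree R M 0 q :=
  ⟨⟨1, SetLike.one_mem_graded (⋀[R]^· M)⟩ ⊗ₜ w, by simp [bidegreeEmb_tmul]⟩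

theorem mul_mem_bidegree {p₁ q₁ p₂ q₂ : ℕ} {X W : ExteriorAlgebra R (M × M)}
    (hX : X ∈ bidegree R M p₁ q₁) (hW : W ∈ bidegree R M p₂ q₂) :
    X * W ∈ bidegree R M (p₁ + p₂) (q₁ + q₂) := by
  obtain ⟨S, rfl⟩ := hX
  obtain ⟨T, rfl⟩ := hW
  induction S with
  | zero => simp
  | add S S' hS hS' => rw [map_add, add_mul]; exact add_mem hS hS'
  | tmul u₁ w₁ =>
    induction T with
    | zero => simp
    | add T T' hT hT' => rw [map_add, mul_add]; exact add_mem hT hT'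
    | tmul u₂ w₂ =>
      rw [bidegreeEmb_tmul_mul_tmul]
      exact Submodule.smul_mem _ _
        ⟨⟨_, SetLike.mul_mem_graded u₁.2 u₂.2⟩ ⊗ₜ ⟨_, SetLike.mul_mem_graded w₁.2 w₂.2⟩, rfl⟩

theorem polarization_inlHom_ιMulti {p q : ℕ} (v : Fin (p + q) → M) :
    polarization R M q (inlHom R M (ιMulti R (p + q) v)) =
      ∑ σ ∈ shuffles p q, (Equiv.Perm.sign σ : ℤ) •
        bidegreeEmb R M p q (exteriorPower.ιMulti R p (fun i => v (σ (Fin.castAdd q i))) ⊗ₜ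
          exteriorPower.ιMulti R q (fun j => v (σ (Fin.natAdd p j)))) := by
  rw [map_apply_ιMulti, divPow_ιMulti, ← sum_shuffles_alternatingMap]
  refine Finset.sum_congr rfl fun σ _ => ?_
  rw [bidegreeEmb_tmul, exteriorPower.ιMulti_apply_coe, exteriorPower.ιMulti_apply_coe,
    map_apply_ιMulti, map_apply_ιMulti, ιMulti_mul_ιMulti, ← shift_comp_inl]
  rfl

theorem polarization_mul_inrHom (k : ℕ) (X : ExteriorAlgebra R (M × M))
    (w : ExteriorAlgebra R M) :
    polarization R M k (X * inrHom R M w) = polarization R M k X * inrHom R M w := by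
  rw [divPow_mul, Finset.sum_eq_single (k, 0), divPow_zero]
  · rintro ⟨i, j⟩ hij hne
    have hj : j ≠ 0 := by
      rintro rfl
      exact hne (by simpa using hij)
    rw [divPow_map_of_comp_eq_zero shift_comp_inr hj, mul_zero]
  · simp

theorem polarization_inlHom_mem_bidegree {p k : ℕ} (u : ⋀[R]^(p + k) M) :
    polarization R M k (inlHom R M u) ∈ bidegree R M p k := by
  suffices h : ⊤ ≤ (bidegree R M p k).comap
      (polarization R M k ∘ₗ (inlHom R M).toLinearMap ∘ₗ (⋀[R]^(p + k) M).subtype) from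
    h (Submodule.mem_top (x := u))
  rw [← exteriorPower.ιMulti_span, Submodule.span_le]
  rintro _ ⟨v, rfl⟩
  change polarization R M k (inlHom R M (ιMulti R (p + k) v)) ∈ bidegree R M p k
  rw [polarization_inlHom_ιMulti]
  exact sum_mem fun σ _ => zsmul_mem (LinearMap.mem_range_self (bidegreeEmb R M p k) _) _

theorem polarization_mem_bidegree {p q k : ℕ} {X : ExteriorAlgebra R (M × M)}
    (hX : X ∈ bidegree R M (p + k) q) : polarization R M k X ∈ bidegree R M p (q + k) := by
  obtain ⟨S, rfl⟩ := hX
  induction S with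
  | zero => simp
  | add S T hS hT => rw [map_add, map_add]; exact add_mem hS hT
  | tmul u w =>
    have h := mul_mem_bidegree (polarization_inlHom_mem_bidegree u) (inrHom_mem_bidegree w)
    rwa [← polarization_mul_inrHom, ← bidegreeEmb_tmul, add_zero, add_comm k] at h

theorem polarization_one_eq_zero_of_mem_bidegree {q : ℕ} {X : ExteriorAlgebra R (M × M)}
    (hX : X ∈ bidegree R M 0 q) : polarization R M 1 X = 0 := by
  obtain ⟨S, rfl⟩ := hX
  induction S with
  | zero => simp
  | add S T hS hT => rw [map_add, map_add, hS, hT, add_zero]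
  | tmul u w =>
    rw [bidegreeEmb_tmul, polarization_mul_inrHom, divPow_map_eq_zero_of_lt _ _ one_pos u, zero_mul]

variable (R M) in
/-- The relations defining the Schur module `L_{(a,b)}`, transported to the part of bidegree
`(a, b)` of `Λ(M × M)`, where they are the image of the first polarization operator. -/
def polarizationRel (a : ℕ) : ℕ → Submodule R (ExteriorAlgebra R (M × M))
  | 0 => ⊥
  | b + 1 => (bidegree R M (a + 1) b).map (polarization R M 1)

theorem polarization_mul_sub_mem_polarizationRel {k : ℕ} (hk : IsUnit (k ! : R)) {p q r s : ℕ}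
    {X W : ExteriorAlgebra R (M × M)} (hX : X ∈ bidegree R M (p + k) q)
    (hW : W ∈ bidegree R M r s) :
    polarization R M k X * W - (-1 : R) ^ k • (X * polarization R M k W) ∈
      polarizationRel R M (p + r) (q + s + k) := by
  induction k generalizing p r s W with
  | zero => simp [divPow_zero]
  | succ k ih =>
    rw [Nat.factorial_succ, Nat.cast_mul] at hk
    obtain ⟨hk₁, hk₂⟩ := IsUnit.mul_iff.1 hk
    have hX' : X ∈ bidegree R M (p + 1 + k) q := by rwa [add_assoc, add_comm 1]
    -- `D_1 (D_k X * W) = (k + 1) • (D_{k+1} X * W) + D_k X * D_1 W`, whose left side is a relation.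
    have hrel : polarization R M 1 (polarization R M k X * W) ∈
        polarizationRel R M (p + r) (q + s + (k + 1)) := by
      refine Submodule.mem_map_of_mem (p := bidegree R M (p + r + 1) (q + s + k)) ?_
      rw [add_right_comm p, add_right_comm q]
      exact mul_mem_bidegree (polarization_mem_bidegree hX') hW
    have hparts : polarization R M k X * polarization R M 1 W -
        (-1 : R) ^ k • (X * polarization R M k (polarization R M 1 W)) ∈
          polarizationRel R M (p + r) (q + s + (k + 1)) := by
      cases r with
      | zero => simp [polarization_one_eq_zero_of_mem_bidegree hW]
      | succ r =>
        have h := ih hk₂ hX' (polarization_mem_bidegree hW)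
        rwa [add_assoc p, add_comm 1, ← add_assoc q, add_assoc _ 1, add_comm 1 k] at h
    rw [← Submodule.smul_mem_iff_of_isUnit _ hk₁]
    convert! sub_mem hrel hparts using 1
    rw [divPow_one_mul, divPow_divPow shift_comp_shift, divPow_divPow shift_comp_shift,
      add_comm 1 k, Nat.choose_succ_self_right, Nat.choose_one_right, smul_mul_assoc,
      mul_smul_comm, pow_succ]
    module

end Relations

section SchurModules

variable {K : Type} [Field K] {n : ℕ}

theorem coe_ecast {p q : ℕ} (h : p = q) (x : Lam K n p) :
    (ecast K n h x : ExteriorAlgebra K (V K n)) = x := by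
  subst h
  rfl

theorem bidegreeEmb_congr_ecast {p q p' q' : ℕ} (hp : p = p') (hq : q = q')
    (T : Lam K n p ⊗[K] Lam K n q) :
    bidegreeEmb K (V K n) p' q' (TensorProduct.congr (ecast K n hp) (ecast K n hq) T) =
      bidegreeEmb K (V K n) p q T := by
  subst hp hq
  exact congrArg _ (LinearMap.congr_fun TensorProduct.map_id T)

theorem IsMulMap.coe_apply_tmul {p q : ℕ} {m : Lam K n p ⊗[K] Lam K n q →ₗ[K] Lam K n (p + q)}
    (hm : IsMulMap K n p q m) (u : Lam K n p) (w : Lam K n q) :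
    (m (u ⊗ₜ w) : ExteriorAlgebra K (V K n)) = u * w := by
  have h : (⋀[K]^(p + q) (V K n)).subtype ∘ₗ m = LinearMap.mul' K _ ∘ₗ
      TensorProduct.map (⋀[K]^p (V K n)).subtype (⋀[K]^q (V K n)).subtype := by
    refine TensorProduct.ext ?_
    refine exteriorPower.linearMap_ext (AlternatingMap.ext fun v => ?_)
    refine exteriorPower.linearMap_ext (AlternatingMap.ext fun w => ?_)
    exact (congrArg Subtype.val (hm v w)).trans (ExteriorAlgebra.ιMulti_mul_ιMulti v w).symm
  exact LinearMap.congr_fun h (u ⊗ₜ w)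

theorem IsComulMap.bidegreeEmb_apply {p q : ℕ}
    {D : Lam K n (p + q) →ₗ[K] Lam K n p ⊗[K] Lam K n q} (hD : IsComulMap K n p q D)
    (x : Lam K n (p + q)) :
    bidegreeEmb K (V K n) p q (D x) = polarization K (V K n) q (inlHom K (V K n) x) := by
  suffices h : bidegreeEmb K (V K n) p q ∘ₗ D = polarization K (V K n) q ∘ₗ
      (inlHom K (V K n)).toLinearMap ∘ₗ (⋀[K]^(p + q) (V K n)).subtype from
    LinearMap.congr_fun h x
  refine exteriorPower.linearMap_ext (AlternatingMap.ext fun v => ?_)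
  refine (congrArg (bidegreeEmb K (V K n) p q) (hD v)).trans ?_
  rw [map_sum]
  simp only [map_zsmul]
  exact (polarization_inlHom_ιMulti v).symm

variable {mf : ∀ p q : ℕ, Lam K n p ⊗[K] Lam K n q →ₗ[K] Lam K n (p + q)}
  {Df : ∀ p q : ℕ, Lam K n (p + q) →ₗ[K] Lam K n p ⊗[K] Lam K n q}

theorem bidegreeEmb_pairMul (hmf : ∀ p q, IsMulMap K n p q (mf p q)) {p₁ q₁ p₂ q₂ : ℕ}
    (S : Lam K n p₁ ⊗[K] Lam K n q₁) (T : Lam K n p₂ ⊗[K] Lam K n q₂) :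
    bidegreeEmb K (V K n) (p₁ + p₂) (q₁ + q₂) (pairMul K n mf p₁ q₁ p₂ q₂ (S ⊗ₜ T)) =
      (-1 : K) ^ (q₁ * p₂) •
        (bidegreeEmb K (V K n) p₁ q₁ S * bidegreeEmb K (V K n) p₂ q₂ T) := by
  induction S with
  | zero => simp
  | add S S' hS hS' => simp only [TensorProduct.add_tmul, map_add, hS, hS', add_mul, smul_add]
  | tmul u₁ w₁ =>
    induction T with
    | zero => simp
    | add T T' hT hT' => simp only [TensorProduct.tmul_add, map_add, hT, hT', mul_add, smul_add]
    | tmul u₂ w₂ =>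
      rw [bidegreeEmb_tmul_mul_tmul, smul_smul, ← mul_pow, neg_one_mul, neg_neg, one_pow,
        one_smul, ← (hmf p₁ p₂).coe_apply_tmul, ← (hmf q₁ q₂).coe_apply_tmul]
      rfl

theorem bidegreeEmb_theta1 (hmf : ∀ p q, IsMulMap K n p q (mf p q))
    (hDf : ∀ p q, IsComulMap K n p q (Df p q)) {a b : ℕ} (hb : 1 ≤ b)
    (S : Lam K n (a + 1) ⊗[K] Lam K n (b - 1)) :
    bidegreeEmb K (V K n) a b (theta1 K n mf Df a b hb S) =
      polarization K (V K n) 1 (bidegreeEmb K (V K n) (a + 1) (b - 1) S) := by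
  rw [theta1, LinearMap.comp_apply, LinearEquiv.coe_coe, bidegreeEmb_congr_ecast]
  induction S with
  | zero => simp
  | add S T hS hT => simp only [map_add, hS, hT]
  | tmul u w =>
    have hmul (T : Lam K n (a + 1 - 1) ⊗[K] Lam K n 1) :
        bidegreeEmb K (V K n) (a + 1 - 1) (b - 1 + 1) (TensorProduct.map LinearMap.id
          ((ecast K n (Nat.add_comm 1 (b - 1))).toLinearMap ∘ₗ mf 1 (b - 1))
          (TensorProduct.assoc K _ _ _ (T ⊗ₜ w))) =
            bidegreeEmb K (V K n) (a + 1 - 1) 1 T * inrHom K (V K n) w := by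
      induction T with
      | zero => simp
      | add T T' hT hT' => simp only [TensorProduct.add_tmul, map_add, hT, hT', add_mul]
      | tmul x y =>
        simp only [TensorProduct.assoc_tmul, TensorProduct.map_tmul, LinearMap.id_apply,
          LinearMap.comp_apply, LinearEquiv.coe_coe, bidegreeEmb_tmul, coe_ecast,
          (hmf 1 (b - 1)).coe_apply_tmul, map_mul, mul_assoc]
    rw [thetaMap, LinearMap.comp_apply, LinearMap.comp_apply, TensorProduct.map_tmul,
      LinearEquiv.coe_coe, LinearMap.id_apply, hmul, LinearMap.comp_apply,
      (hDf _ _).bidegreeEmb_apply, LinearEquiv.coe_coe, coe_ecast, bidegreeEmb_tmul,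
      polarization_mul_inrHom]

theorem map_bidegreeEmb_schurRel (hmf : ∀ p q, IsMulMap K n p q (mf p q))
    (hDf : ∀ p q, IsComulMap K n p q (Df p q)) (a b : ℕ) :
    (schurRel K n mf Df a b).map (bidegreeEmb K (V K n) a b) = polarizationRel K (V K n) a b := by
  cases b with
  | zero => simp [schurRel, polarizationRel]
  | succ b =>
    rw [schurRel, dif_pos (Nat.le_add_left 1 b), ← LinearMap.range_comp, polarizationRel, bidegree,
      ← LinearMap.range_comp]
    exact congrArg LinearMap.range (LinearMap.ext (bidegreeEmb_theta1 hmf hDf _))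

/-- The map from the Schur module `L_{(a,b)}` to the quotient of `Λ(V × V)` by the polarization
relations induced by `bidegreeEmb`. -/
def schurEmb (hmf : ∀ p q, IsMulMap K n p q (mf p q)) (hDf : ∀ p q, IsComulMap K n p q (Df p q))
    (a b : ℕ) : SchurL K n mf Df a b →ₗ[K]
      ExteriorAlgebra K (V K n × V K n) ⧸ polarizationRel K (V K n) a b :=
  Submodule.mapQ _ _ (bidegreeEmb K (V K n) a b)
    (Submodule.map_le_iff_le_comap.1 (map_bidegreeEmb_schurRel hmf hDf a b).le)

theorem schurEmb_schurProj (hmf : ∀ p q, IsMulMap K n p q (mf p q))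
    (hDf : ∀ p q, IsComulMap K n p q (Df p q)) {a b : ℕ} (T : Lam K n a ⊗[K] Lam K n b) :
    schurEmb hmf hDf a b (schurProj K n mf Df a b T) =
      (polarizationRel K (V K n) a b).mkQ (bidegreeEmb K (V K n) a b T) := rfl

theorem schurEmb_injective (hmf : ∀ p q, IsMulMap K n p q (mf p q))
    (hDf : ∀ p q, IsComulMap K n p q (Df p q)) (a b : ℕ) :
    Function.Injective (schurEmb hmf hDf a b) := by
  rw [← LinearMap.ker_eq_bot, schurEmb, Submodule.ker_mapQ, ← map_bidegreeEmb_schurRel hmf hDf,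
    Submodule.comap_map_eq_of_injective (bidegreeEmb_injective a b), Submodule.mkQ_map_self]

end SchurModules

section Exchange

open Finset.HasAntidiagonal (antidiagonal)
open scoped Nat

theorem mkQ_polarization_mul_eq_sum {R M : Type*} [CommRing R] [AddCommGroup M] [Module R M]
    {a₁ a₂ a₃ b₁ b₂ b₃ : ℕ} (hb₁ : IsUnit (b₁ ! : R)) (x : ⋀[R]^(a₁ + b₁) M)
    (y : ⋀[R]^(a₂ + b₂) M) (z : ⋀[R]^(a₃ + b₃) M) :
    (polarizationRel R M (a₁ + a₂ + a₃) (b₁ + b₂ + b₃)).mkQ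
        (polarization R M b₁ (inlHom R M x) *
          (polarization R M b₂ (inlHom R M y) * polarization R M b₃ (inlHom R M z))) =
      ∑ ij ∈ antidiagonal b₁,
        ((-1) ^ b₁ * ((b₂ + ij.1).choose b₂ * (b₃ + ij.2).choose b₃) : R) •
          (polarizationRel R M (a₁ + a₂ + a₃) (b₁ + b₂ + b₃)).mkQ
            (inlHom R M x * (polarization R M (b₂ + ij.1) (inlHom R M y) *
              polarization R M (b₃ + ij.2) (inlHom R M z))) := by
  have h := polarization_mul_sub_mem_polarizationRel hb₁ (inlHom_mem_bidegree x)
    (mul_mem_bidegree (polarization_inlHom_mem_bidegree y) (polarization_inlHom_mem_bidegree z))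
  rw [← add_assoc a₁, show 0 + (b₂ + b₃) + b₁ = b₁ + b₂ + b₃ by omega,
    ← Submodule.Quotient.mk_eq_zero, Submodule.Quotient.mk_sub, sub_eq_zero] at h
  refine h.trans ?_
  rw [divPow_divPow_mul_divPow shift_comp_shift, Finset.mul_sum, Finset.smul_sum,
    ← Submodule.mkQ_apply, map_sum]
  simp only [mul_smul_comm, smul_smul, map_smul]

variable {K : Type} [Field K] {n : ℕ}
  {mf : ∀ p q : ℕ, Lam K n p ⊗[K] Lam K n q →ₗ[K] Lam K n (p + q)}
  {Df : ∀ p q : ℕ, Lam K n (p + q) →ₗ[K] Lam K n p ⊗[K] Lam K n q}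

theorem bidegreeEmb_pairMul_pairMul_comul (hmf : ∀ p q, IsMulMap K n p q (mf p q))
    (hDf : ∀ p q, IsComulMap K n p q (Df p q)) {a₁ a₂ a₃ b₁ b₂ b₃ : ℕ} (x : Lam K n (a₁ + b₁))
    (y : Lam K n (a₂ + b₂)) (z : Lam K n (a₃ + b₃)) :
    bidegreeEmb K (V K n) (a₁ + a₂ + a₃) (b₁ + b₂ + b₃)
        (pairMul K n mf (a₁ + a₂) (b₁ + b₂) a₃ b₃
          (pairMul K n mf a₁ b₁ a₂ b₂ (Df a₁ b₁ x ⊗ₜ Df a₂ b₂ y) ⊗ₜ Df a₃ b₃ z)) =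
      (-1 : K) ^ (b₁ * a₂ + (b₁ + b₂) * a₃) •
        (polarization K (V K n) b₁ (inlHom K (V K n) x) *
          (polarization K (V K n) b₂ (inlHom K (V K n) y) *
            polarization K (V K n) b₃ (inlHom K (V K n) z))) := by
  rw [bidegreeEmb_pairMul hmf, bidegreeEmb_pairMul hmf, (hDf _ _).bidegreeEmb_apply,
    (hDf _ _).bidegreeEmb_apply, (hDf _ _).bidegreeEmb_apply, smul_mul_assoc, smul_smul,
    ← pow_add, add_comm (_ * a₃), mul_assoc]

variable (mf Df) in
/-- The tensor `Σ_{v,w} x∧y_v(a₂−i₂)∧z_w(a₃−i₃) ⊗ y'_v(b₂+i₂)∧z'_w(b₃+i₃)` on the right-hand side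
of the exchange formula. The factor `x` is written `x ⊗ 1` so that `pairMul` applies, hence the
degree `0 + (b₂ + i₂)`. -/
def exchangeTensor {a₁ a₂ a₃ b₁ b₂ b₃ i₂ i₃ : ℕ} (hi : i₂ + i₃ = b₁) (hi₂ : i₂ ≤ a₂)
    (hi₃ : i₃ ≤ a₃) (x : Lam K n (a₁ + b₁)) (y : Lam K n (a₂ + b₂)) (z : Lam K n (a₃ + b₃)) :
    Lam K n (a₁ + a₂ + a₃) ⊗[K] Lam K n (b₁ + b₂ + b₃) :=
  TensorProduct.congr (ecast K n (by omega : a₁ + b₁ + (a₂ - i₂) + (a₃ - i₃) = a₁ + a₂ + a₃))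
    (ecast K n (by omega : 0 + (b₂ + i₂) + (b₃ + i₃) = b₁ + b₂ + b₃))
    (pairMul K n mf (a₁ + b₁ + (a₂ - i₂)) (0 + (b₂ + i₂)) (a₃ - i₃) (b₃ + i₃)
      (pairMul K n mf (a₁ + b₁) 0 (a₂ - i₂) (b₂ + i₂)
          ((x ⊗ₜ wedge K n fun j : Fin 0 => j.elim0) ⊗ₜ
            Df (a₂ - i₂) (b₂ + i₂) (ecast K n (by omega : a₂ + b₂ = a₂ - i₂ + (b₂ + i₂)) y)) ⊗ₜ
        Df (a₃ - i₃) (b₃ + i₃) (ecast K n (by omega : a₃ + b₃ = a₃ - i₃ + (b₃ + i₃)) z)))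

theorem bidegreeEmb_exchangeTensor (hmf : ∀ p q, IsMulMap K n p q (mf p q))
    (hDf : ∀ p q, IsComulMap K n p q (Df p q)) {a₁ a₂ a₃ b₁ b₂ b₃ i₂ i₃ : ℕ}
    (hi : i₂ + i₃ = b₁) (hi₂ : i₂ ≤ a₂) (hi₃ : i₃ ≤ a₃) (x : Lam K n (a₁ + b₁))
    (y : Lam K n (a₂ + b₂)) (z : Lam K n (a₃ + b₃)) :
    bidegreeEmb K (V K n) _ _ (exchangeTensor mf Df hi hi₂ hi₃ x y z) =
      (-1 : K) ^ ((b₂ + i₂) * (a₃ - i₃)) •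
        (inlHom K (V K n) x * (polarization K (V K n) (b₂ + i₂) (inlHom K (V K n) y) *
          polarization K (V K n) (b₃ + i₃) (inlHom K (V K n) z))) := by
  have hone : inrHom K (V K n) (wedge K n fun j : Fin 0 => j.elim0 : Lam K n 0) = 1 := by
    simp [wedge]
  rw [exchangeTensor, bidegreeEmb_congr_ecast, bidegreeEmb_pairMul hmf, bidegreeEmb_pairMul hmf,
    (hDf _ _).bidegreeEmb_apply, (hDf _ _).bidegreeEmb_apply, coe_ecast, coe_ecast,
    bidegreeEmb_tmul, hone, mul_one, zero_mul, pow_zero, one_smul, zero_add, mul_assoc]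

theorem neg_one_pow_exchange_sign {R : Type*} [CommRing R] {a₂ a₃ b₁ b₂ i₂ i₃ : ℕ}
    (hi : i₂ + i₃ = b₁) (hi₃ : i₃ ≤ a₃) :
    (-1 : R) ^ (b₁ * a₂ + (b₁ + b₂) * a₃) * (-1) ^ b₁ =
      (-1) ^ ((a₂ + a₃ + 1) * b₁) * (-1) ^ (i₂ * (a₃ - i₃) + i₃ * b₂) *
        (-1) ^ ((b₂ + i₂) * (a₃ - i₃)) := by
  obtain ⟨c, rfl⟩ := Nat.exists_eq_add_of_le hi₃
  subst hi
  rw [Nat.add_sub_cancel_left, ← pow_add, ← pow_add, ← pow_add,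
    show (a₂ + (i₃ + c) + 1) * (i₂ + i₃) + (i₂ * c + i₃ * b₂) + (b₂ + i₂) * c =
      (i₂ + i₃) * a₂ + (i₂ + i₃ + b₂) * (i₃ + c) + (i₂ + i₃) + 2 * (i₂ * c) by ring,
    pow_add _ _ (2 * _), pow_mul _ 2, neg_one_sq, one_pow, mul_one]

theorem polarization_mul_polarization_eq_zero {R M : Type*} [CommRing R] [AddCommGroup M]
    [Module R M] {a₂ a₃ b₂ b₃ i₂ i₃ : ℕ} (y : ⋀[R]^(a₂ + b₂) M) (z : ⋀[R]^(a₃ + b₃) M)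
    (hi : ¬(i₂ ≤ a₂ ∧ i₃ ≤ a₃)) :
    polarization R M (b₂ + i₂) (inlHom R M y) * polarization R M (b₃ + i₃) (inlHom R M z) = 0 := by
  rcases not_and_or.1 hi with hi | hi
  · rw [divPow_map_eq_zero_of_lt _ _ (by omega) y, zero_mul]
  · rw [divPow_map_eq_zero_of_lt _ _ (by omega) z, mul_zero]

end Exchange

theorem statement4_general (K : Type) [Field K] (n : ℕ) (a₁ a₂ a₃ b₁ b₂ b₃ : ℕ)
    (hb₁ : (b₁.factorial : K) ≠ 0)
    (mf : ∀ p q : ℕ, Lam K n p ⊗[K] Lam K n q →ₗ[K] Lam K n (p + q))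
    (Df : ∀ p q : ℕ, Lam K n (p + q) →ₗ[K] Lam K n p ⊗[K] Lam K n q)
    (hmf : ∀ p q, IsMulMap K n p q (mf p q)) (hDf : ∀ p q, IsComulMap K n p q (Df p q))
    (x : Lam K n (a₁ + b₁)) (y : Lam K n (a₂ + b₂)) (z : Lam K n (a₃ + b₃)) :
    schurProj K n mf Df (a₁ + a₂ + a₃) (b₁ + b₂ + b₃)
        (pairMul K n mf (a₁ + a₂) (b₁ + b₂) a₃ b₃
          (pairMul K n mf a₁ b₁ a₂ b₂ (Df a₁ b₁ x ⊗ₜ Df a₂ b₂ y) ⊗ₜ Df a₃ b₃ z)) =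
      (-1 : K) ^ ((a₂ + a₃ + 1) * b₁) • ∑ i₂ ∈ Finset.range (b₁ + 1),
        if h : i₂ ≤ b₁ ∧ i₂ ≤ a₂ ∧ b₁ - i₂ ≤ a₃ then
          ((-1 : K) ^ (i₂ * (a₃ - (b₁ - i₂)) + (b₁ - i₂) * b₂) * ((b₂ + i₂).choose b₂ : K) *
              ((b₃ + (b₁ - i₂)).choose b₃ : K)) •
            schurProj K n mf Df (a₁ + a₂ + a₃) (b₁ + b₂ + b₃)
              (exchangeTensor mf Df (Nat.add_sub_of_le h.1) h.2.1 h.2.2 x y z)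
        else 0 := by
  refine schurEmb_injective hmf hDf _ _ ?_
  rw [schurEmb_schurProj, bidegreeEmb_pairMul_pairMul_comul hmf hDf, map_smul,
    mkQ_polarization_mul_eq_sum hb₁.isUnit, Finset.Nat.sum_antidiagonal_eq_sum_range_succ_mk,
    map_smul, map_sum, Finset.smul_sum, Finset.smul_sum]
  refine Finset.sum_congr rfl fun i₂ hi₂ => ?_
  have hi : i₂ ≤ b₁ := Nat.lt_succ_iff.1 (Finset.mem_range.1 hi₂)
  split_ifs with h
  · rw [map_smul, schurEmb_schurProj, bidegreeEmb_exchangeTensor hmf hDf, map_smul, smul_smul,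
      smul_smul, smul_smul]
    congr 1
    linear_combination ((b₂ + i₂).choose b₂ : K) * ((b₃ + (b₁ - i₂)).choose b₃ : K) *
      neg_one_pow_exchange_sign (R := K) (a₂ := a₂) (b₂ := b₂) (Nat.add_sub_of_le hi) h.2.2
  · rw [polarization_mul_polarization_eq_zero y z fun h' => h ⟨hi, h'⟩, mul_zero, map_zero,
      map_zero, smul_zero, smul_zero, smul_zero]

/-- Lemma 3.1 ("exchange lemma") of the paper. With `a = a₁+a₂+a₃ ≥ b = b₁+b₂+b₃`
and `b₁ ≤ a₂+a₃`, for `x ∈ Λ^{a₁+b₁}`, `y ∈ Λ^{a₂+b₂}`, `z ∈ Λ^{a₃+b₃}` and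
`ω = Σ_{u,v,w} x_u(a₁)∧y_v(a₂)∧z_w(a₃) ⊗ x'_u(b₁)∧y'_v(b₂)∧z'_w(b₃)`, we have in `L_{(a,b)}`:
`π(ω) = (−1)^{(a₂+a₃+1)b₁} Σ_{i₂+i₃=b₁, i₂≤a₂, i₃≤a₃} (−1)^{i₂(a₃−i₃)+i₃b₂}
  C(b₂+i₂,b₂) C(b₃+i₃,b₃) π(Σ_{v,w} x∧y_v(a₂−i₂)∧z_w(a₃−i₃) ⊗ y'_v(b₂+i₂)∧z'_w(b₃+i₃))`. -/
theorem statement4 (K : Type) [Field K] [CharZero K] (n : ℕ)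
    (a₁ a₂ a₃ b₁ b₂ b₃ : ℕ)
    (hab : b₁+b₂+b₃ ≤ a₁+a₂+a₃) (hb1 : b₁ ≤ a₂ + a₃)
    (mf : ∀ p q : ℕ, Lam K n p ⊗[K] Lam K n q →ₗ[K] Lam K n (p+q))
    (Df : ∀ p q : ℕ, Lam K n (p+q) →ₗ[K] Lam K n p ⊗[K] Lam K n q)
    (hmf : ∀ p q, IsMulMap K n p q (mf p q))
    (hDf : ∀ p q, IsComulMap K n p q (Df p q))
    (x : Lam K n (a₁+b₁)) (y : Lam K n (a₂+b₂)) (z : Lam K n (a₃+b₃)) :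
    schurProj K n mf Df (a₁+a₂+a₃) (b₁+b₂+b₃)
        (pairMul K n mf (a₁+a₂) (b₁+b₂) a₃ b₃
          ((pairMul K n mf a₁ b₁ a₂ b₂ ((Df a₁ b₁ x) ⊗ₜ[K] (Df a₂ b₂ y)))
            ⊗ₜ[K] (Df a₃ b₃ z))) =
      (-1:K) ^ ((a₂+a₃+1)*b₁) •
        ∑ i₂ ∈ Finset.range (b₁+1),
          if h : i₂ ≤ b₁ ∧ i₂ ≤ a₂ ∧ b₁ - i₂ ≤ a₃ then
            (((-1:K) ^ (i₂*(a₃-(b₁-i₂)) + (b₁-i₂)*b₂)) * ((b₂+i₂).choose b₂ : K) *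
                ((b₃+(b₁-i₂)).choose b₃ : K)) •
              schurProj K n mf Df (a₁+a₂+a₃) (b₁+b₂+b₃)
                ((TensorProduct.congr
                    (ecast K n
                      (by omega : ((a₁+b₁)+(a₂-i₂))+(a₃-(b₁-i₂)) = a₁+a₂+a₃))
                    (ecast K n
                      (by omega : (0+(b₂+i₂))+(b₃+(b₁-i₂)) = b₁+b₂+b₃))).toLinearMap
                  (pairMul K n mf ((a₁+b₁)+(a₂-i₂)) (0+(b₂+i₂)) (a₃-(b₁-i₂)) (b₃+(b₁-i₂))
                    ((pairMul K n mf (a₁+b₁) 0 (a₂-i₂) (b₂+i₂)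
                      ((x ⊗ₜ[K] wedge K n (fun j : Fin 0 => j.elim0)) ⊗ₜ[K]
                        (Df (a₂-i₂) (b₂+i₂)
                          (ecast K n (by omega : a₂+b₂ = (a₂-i₂)+(b₂+i₂)) y))))
                      ⊗ₜ[K]
                      (Df (a₃-(b₁-i₂)) (b₃+(b₁-i₂))
                        (ecast K n
                          (by omega : a₃+b₃ = (a₃-(b₁-i₂))+(b₃+(b₁-i₂))) z)))))
          else 0 :=
  statement4_general K n a₁ a₂ a₃ b₁ b₂ b₃ (Nat.cast_ne_zero.2 b₁.factorial_ne_zero)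
    mf Df hmf hDf x y z

end MMS
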